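/- arXiv:1805.11031 — 9 statements merged into one kernel-verified Lean document; each statement's English description precedes it below -/
import Mathlib

section
/- Consider the polynomial p(c,λ) = −196 + 172c − c^2 + 213444λ^2 − 329868cλ^2 + 30429c^2λ^2 + 74970c^3λ^2 + 11025c^4λ^2 in two variables c, λ over ℂ. Then (i) p(c,λ) = 441·λ^2·(c−1)^2·(22+5c)^2 − (c^2 − 172c + 196) identically, and (ii) p is irreducible as an element of the polynomial ring ℂ[c,λ] (i.e. as an element of MvPolynomial (Fin 2) ℂ). -/
open MvPolynomial

/-- `ℂ[c,λ] ≃ ℂ[c][λ]`. -/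
noncomputable def bivEquiv : MvPolynomial (Fin 2) ℂ ≃+* Polynomial (Polynomial ℂ) :=
  RingEquiv.ofRingHom
    (MvPolynomial.eval₂Hom (Polynomial.C.comp Polynomial.C) ![Polynomial.C Polynomial.X, Polynomial.X])
    (Polynomial.eval₂RingHom (Polynomial.eval₂RingHom MvPolynomial.C (MvPolynomial.X 0))
      (MvPolynomial.X 1))
    (by ext <;> simp)
    (by
      apply MvPolynomial.ringHom_ext
      · intro r; simp
      · intro i; fin_cases i <;> simp)

lemma bivEquiv_X0 : bivEquiv (X 0) = Polynomial.C Polynomial.X := by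
  simp [bivEquiv]

lemma bivEquiv_X1 : bivEquiv (X 1) = Polynomial.X := by
  simp [bivEquiv]

lemma irred_aux (A q : Polynomial ℂ) (r s : ℂ) (hq : q = (Polynomial.X - Polynomial.C r) * (Polynomial.X - Polynomial.C s))
    (hrs : r ≠ s) (h : IsCoprime A q) :
    Irreducible (Polynomial.C A * Polynomial.X ^ 2 + Polynomial.C (-q)) := by
  have hAr : ¬ (Polynomial.X - Polynomial.C r) ∣ A := by
    intro hd
    exact Polynomial.not_isUnit_X_sub_C r
      (h.isUnit_of_dvd' hd (hq ▸ dvd_mul_right _ _))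
  have hA : A ≠ 0 := by
    rintro rfl
    exact hAr (dvd_zero _)
  have hdeg : (Polynomial.C A * Polynomial.X ^ 2 + Polynomial.C (-q)).degree = 2 := by
    compute_degree!
  have hnat : (Polynomial.C A * Polynomial.X ^ 2 + Polynomial.C (-q)).natDegree = 2 :=
    Polynomial.natDegree_eq_of_degree_eq_some hdeg
  have hc2 : (Polynomial.C A * Polynomial.X ^ 2 + Polynomial.C (-q)).coeff 2 = A := by
    simp [Polynomial.coeff_X_pow, -map_neg, Polynomial.coeff_C]
  have hc1 : (Polynomial.C A * Polynomial.X ^ 2 + Polynomial.C (-q)).coeff 1 = 0 := by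
    simp [Polynomial.coeff_X_pow, -map_neg, Polynomial.coeff_C]
  have hc0 : (Polynomial.C A * Polynomial.X ^ 2 + Polynomial.C (-q)).coeff 0 = -q := by
    simp [Polynomial.coeff_X_pow, -map_neg, Polynomial.coeff_C]
  apply Polynomial.irreducible_of_eisenstein_criterion
    (P := Ideal.span {Polynomial.X - Polynomial.C r})
  · exact (Ideal.span_singleton_prime (Polynomial.X_sub_C_ne_zero r)).2 (Polynomial.prime_X_sub_C r)
  · rw [Polynomial.leadingCoeff, hnat, hc2, Ideal.mem_span_singleton]
    exact hAr
  · intro n hn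
    rw [hdeg] at hn
    have hn : n < 2 := by exact_mod_cast hn
    rw [Ideal.mem_span_singleton]
    interval_cases n
    · rw [hc0, hq, dvd_neg]; exact dvd_mul_right _ _
    · rw [hc1]; exact dvd_zero _
  · rw [hdeg]; norm_num
  · rw [hc0, Ideal.span_singleton_pow, Ideal.mem_span_singleton, dvd_neg, hq, pow_two]
    intro hd
    have := (mul_dvd_mul_iff_left (Polynomial.X_sub_C_ne_zero r)).1 hd
    rw [Polynomial.dvd_iff_isRoot] at this
    simp [sub_eq_zero] at this
    exact hrs this
  · intro a ha
    rw [Polynomial.C_dvd_iff_dvd_coeff] at ha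
    have h2 := ha 2
    have h0 := ha 0
    rw [hc2] at h2
    rw [hc0, dvd_neg] at h0
    exact h.isUnit_of_dvd' h2 h0

lemma coprime_aux : IsCoprime
    (441 * (Polynomial.X - 1) ^ 2 * (22 + 5 * Polynomial.X) ^ 2 : Polynomial ℂ)
    (Polynomial.X ^ 2 - 172 * Polynomial.X + 196) := by
  have hC : ∀ z : ℂ, z ≠ 0 → Polynomial.C z * Polynomial.C z⁻¹ = 1 := by
    intro z hz
    rw [← Polynomial.C_mul, mul_inv_cancel₀ hz, Polynomial.C_1]
  have h1 := hC 441 (by norm_num)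
  have h2 := hC 25 (by norm_num)
  have h3 := hC 24304 (by norm_num)
  have e1 : (Polynomial.C 441 : Polynomial ℂ) = 441 := rfl
  have e2 : (Polynomial.C 25 : Polynomial ℂ) = 25 := rfl
  have e3 : (Polynomial.C 24304 : Polynomial ℂ) = 24304 := rfl
  rw [e1] at h1
  rw [e2] at h2
  rw [e3] at h3
  refine IsCoprime.mul_left (IsCoprime.mul_left ?_ (IsCoprime.pow_left ?_)) (IsCoprime.pow_left ?_)
  · exact ⟨Polynomial.C 441⁻¹, 0, by linear_combination h1⟩
  · exact ⟨-(Polynomial.X - 171) * Polynomial.C 25⁻¹, Polynomial.C 25⁻¹, by linear_combination h2⟩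
  · exact ⟨-(5 * Polynomial.X - 882) * Polynomial.C 24304⁻¹, 25 * Polynomial.C 24304⁻¹,
      by linear_combination h3⟩

/-- The polynomial `p(c,λ) = -196 + 172c - c² + 213444λ² - 329868cλ² + 30429c²λ²
+ 74970c³λ² + 11025c⁴λ²` satisfies
`p = 441λ²(c-1)²(22+5c)² - (c² - 172c + 196)` identically, and is irreducible
in `ℂ[c,λ]`. -/
theorem shapovalov6_factor_identity_and_irreducible :
    let c : MvPolynomial (Fin 2) ℂ := X 0
    let l : MvPolynomial (Fin 2) ℂ := X 1
    let p : MvPolynomial (Fin 2) ℂ :=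
      -196 + 172 * c - c ^ 2 + 213444 * l ^ 2 - 329868 * c * l ^ 2
        + 30429 * c ^ 2 * l ^ 2 + 74970 * c ^ 3 * l ^ 2 + 11025 * c ^ 4 * l ^ 2
    p = 441 * l ^ 2 * (c - 1) ^ 2 * (22 + 5 * c) ^ 2 - (c ^ 2 - 172 * c + 196)
      ∧ Irreducible p := by
  intro c l p
  have hp : p = 441 * l ^ 2 * (c - 1) ^ 2 * (22 + 5 * c) ^ 2 - (c ^ 2 - 172 * c + 196) := by
    simp only [p]; ring
  refine ⟨hp, ?_⟩
  rw [← MulEquiv.irreducible_iff bivEquiv, hp]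
  obtain ⟨w, hw⟩ : ∃ w : ℂ, w ^ 2 = 2 := ⟨_, Complex.cpow_nat_inv_pow 2 two_ne_zero⟩
  have hw0 : w ≠ 0 := by
    rintro rfl
    norm_num at hw
  have hq : (Polynomial.X ^ 2 - 172 * Polynomial.X + 196 : Polynomial ℂ) =
      (Polynomial.X - Polynomial.C (86 + 60 * w)) * (Polynomial.X - Polynomial.C (86 - 60 * w)) := by
    have hw' : (Polynomial.C w) ^ 2 = (2 : Polynomial ℂ) := by
      rw [← Polynomial.C_pow, hw]; rfl
    have e1 : (Polynomial.C 86 : Polynomial ℂ) = 86 := rfl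
    have e2 : (Polynomial.C 60 : Polynomial ℂ) = 60 := rfl
    rw [Polynomial.C_add, Polynomial.C_sub, Polynomial.C_mul, e1, e2]
    linear_combination 3600 * hw'
  have key := irred_aux _ _ _ _ hq (by
    intro h
    apply hw0
    linear_combination h / 120) coprime_aux
  convert key using 1
  simp only [c, l, map_sub, map_add, map_mul, map_pow, map_ofNat, map_one, map_neg,
    bivEquiv_X0, bivEquiv_X1]
  ring
end

section
/- Let n ≥ 2 be an integer and k ∈ ℂ. Define G = −10 − 21k − 14k^2 − 23n − 32kn − 16n^2 + 8kn^2 + 8k^2 n^2 + 8n^3 + 16kn^3 + 8n^4, H = −22 − 22k − 22n − 15kn − 10k^2 n − 30n^2 − 50kn^2 − 30n^3 + 40kn^3 + 40k^2 n^3 + 40n^4 + 80kn^4 + 40n^5, and F = −28 − 130k − 170k^2 − 68k^3 − 222n − 532kn − 161k^2 n + 228k^3 n + 76k^4 n − 186n^2 + 687kn^2 + 1892k^2 n^2 + 908k^3 n^2 + 730n^3 + 2780kn^3 + 1508k^2 n^3 − 800k^3 n^3 − 320k^4 n^3 + 1106n^4 + 536kn^4 − 2520k^2 n^4 − 1360k^3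 n^4 − 136n^5 − 2608kn^5 − 2064k^2 n^5 + 128k^3 n^5 + 64k^4 n^5 − 888n^6 − 1328kn^6 + 384k^2 n^6 + 256k^3 n^6 − 304n^7 + 384kn^7 + 384k^2 n^7 + 128n^8 + 256kn^8 + 64n^9. Assume 1+k+n ≠ 0, −1−k+2kn+2n^2 ≠ 0, −1+n+2kn+2n^2 ≠ 0, G ≠ 0, and H ≠ 0. Set c = −n(k+2n+2kn+2n^2)(−3−2k+4kn+4n^2)/(1+k+n) and λ = −(1+k+n)·F / (7(1+2n)(−1−k+2kn+2n^2)(−1+n+2kn+2n^2)·G·H). Then p_n(c,λ) = 0, i.e. f(c,n) + λ·g(c,n) + λ^2·h(c,n) = 0. -/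
set_option maxHeartbeats 4000000
set_option maxRecDepth 100000

/-- The polynomial `f(c,n)` from the type-C truncation polynomial. -/
noncomputable def fC (c n : ℂ) : ℂ :=
  -204 * c ^ 2 - 192 * c ^ 3 + 171 * c ^ 4 + 952 * c * n - 4612 * c ^ 2 * n
    + 2348 * c ^ 3 * n - 38 * c ^ 4 * n + 1568 * n ^ 2 - 7708 * c * n ^ 2
    + 1788 * c ^ 2 * n ^ 2 + 2401 * c ^ 3 * n ^ 2 - 74 * c ^ 4 * n ^ 2
    + 560 * n ^ 3 - 18936 * c * n ^ 3 + 22280 * c ^ 2 * n ^ 3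
    - 2112 * c ^ 3 * n ^ 3 + 8 * c ^ 4 * n ^ 3 - 16304 * n ^ 4
    + 18640 * c * n ^ 4 + 3420 * c ^ 2 * n ^ 4 - 364 * c ^ 3 * n ^ 4
    + 8 * c ^ 4 * n ^ 4 - 17408 * n ^ 5 + 27680 * c * n ^ 5
    - 10576 * c ^ 2 * n ^ 5 + 304 * c ^ 3 * n ^ 5 - 3264 * n ^ 6
    - 3072 * c * n ^ 6 + 2736 * c ^ 2 * n ^ 6

/-- The polynomial `g(c,n)` from the type-C truncation polynomial. -/
noncomputable def gC (c n : ℂ) : ℂ :=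
  -14 * (c - 1) * (2 * c - 1) * (22 + 5 * c) * (n - 2) * (n - 1)
    * (3 * c + 10 * n + 2 * c * n + 12 * n ^ 2)
    * (5 * c + 28 * n + 2 * c * n + 40 * n ^ 2)

/-- The polynomial `h(c,n)` from the type-C truncation polynomial. -/
noncomputable def hC (c n : ℂ) : ℂ :=
  49 * (c - 1) ^ 2 * (22 + 5 * c) ^ 2
    * (21 * c ^ 2 + 70 * c * n - 14 * c ^ 2 * n + 200 * n ^ 2 - 135 * c * n ^ 2
      - 26 * c ^ 2 * n ^ 2 + 380 * n ^ 3 - 176 * c * n ^ 3 + 8 * c ^ 2 * n ^ 3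
      + 436 * n ^ 4 + 132 * c * n ^ 4 + 8 * c ^ 2 * n ^ 4 + 448 * n ^ 5
      + 112 * c * n ^ 5 + 336 * n ^ 6)

/-- The type-C truncation polynomial `p_n(c,λ) = f(c,n) + λ·g(c,n) + λ²·h(c,n)`. -/
noncomputable def pC (n c lam : ℂ) : ℂ := fC c n + lam * gC c n + lam ^ 2 * hC c n

/-- The rational parametrization of the truncation curve `V(I_n)` by the level `k`
of the type-C principal W-algebra `W^k(sp_{2n}, f_prin)` lies on `{p_n = 0}`. -/
theorem typeC_parametrization_on_curve (n : ℤ) (hn : 2 ≤ n) (k : ℂ)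
    (nn : ℂ) (hnn : nn = (n : ℂ))
    (G H F c lam : ℂ)
    (hG : G = -10 - 21 * k - 14 * k ^ 2 - 23 * nn - 32 * k * nn - 16 * nn ^ 2
      + 8 * k * nn ^ 2 + 8 * k ^ 2 * nn ^ 2 + 8 * nn ^ 3 + 16 * k * nn ^ 3 + 8 * nn ^ 4)
    (hH : H = -22 - 22 * k - 22 * nn - 15 * k * nn - 10 * k ^ 2 * nn - 30 * nn ^ 2
      - 50 * k * nn ^ 2 - 30 * nn ^ 3 + 40 * k * nn ^ 3 + 40 * k ^ 2 * nn ^ 3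
      + 40 * nn ^ 4 + 80 * k * nn ^ 4 + 40 * nn ^ 5)
    (hF : F = -28 - 130 * k - 170 * k ^ 2 - 68 * k ^ 3 - 222 * nn - 532 * k * nn
      - 161 * k ^ 2 * nn + 228 * k ^ 3 * nn + 76 * k ^ 4 * nn - 186 * nn ^ 2
      + 687 * k * nn ^ 2 + 1892 * k ^ 2 * nn ^ 2 + 908 * k ^ 3 * nn ^ 2
      + 730 * nn ^ 3 + 2780 * k * nn ^ 3 + 1508 * k ^ 2 * nn ^ 3
      - 800 * k ^ 3 * nn ^ 3 - 320 * k ^ 4 * nn ^ 3 + 1106 * nn ^ 4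
      + 536 * k * nn ^ 4 - 2520 * k ^ 2 * nn ^ 4 - 1360 * k ^ 3 * nn ^ 4
      - 136 * nn ^ 5 - 2608 * k * nn ^ 5 - 2064 * k ^ 2 * nn ^ 5
      + 128 * k ^ 3 * nn ^ 5 + 64 * k ^ 4 * nn ^ 5 - 888 * nn ^ 6
      - 1328 * k * nn ^ 6 + 384 * k ^ 2 * nn ^ 6 + 256 * k ^ 3 * nn ^ 6
      - 304 * nn ^ 7 + 384 * k * nn ^ 7 + 384 * k ^ 2 * nn ^ 7 + 128 * nn ^ 8
      + 256 * k * nn ^ 8 + 64 * nn ^ 9)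
    (h1 : 1 + k + nn ≠ 0)
    (h2 : -1 - k + 2 * k * nn + 2 * nn ^ 2 ≠ 0)
    (h3 : -1 + nn + 2 * k * nn + 2 * nn ^ 2 ≠ 0)
    (hGne : G ≠ 0) (hHne : H ≠ 0)
    (hc : c = -nn * (k + 2 * nn + 2 * k * nn + 2 * nn ^ 2)
        * (-3 - 2 * k + 4 * k * nn + 4 * nn ^ 2) / (1 + k + nn))
    (hlam : lam = -(1 + k + nn) * F
        / (7 * (1 + 2 * nn) * (-1 - k + 2 * k * nn + 2 * nn ^ 2)
            * (-1 + nn + 2 * k * nn + 2 * nn ^ 2) * G * H)) :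
    pC nn c lam = 0 := by
  have hn0 : (1 + 2 * nn) ≠ 0 := by
    rw [hnn]
    have : (1 + 2 * n : ℤ) ≠ 0 := by omega
    exact_mod_cast this
  have hcd : c * (1 + k + nn) = -nn * (k + 2 * nn + 2 * k * nn + 2 * nn ^ 2)
        * (-3 - 2 * k + 4 * k * nn + 4 * nn ^ 2) := by
    rw [hc]; field_simp
  have hc1 : (c - 1) * (1 + k + nn) = -((1 + 2 * nn) * (-1 - k + 2 * k * nn + 2 * nn ^ 2)
            * (-1 + nn + 2 * k * nn + 2 * nn ^ 2)) := by
    linear_combination hcd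
  have hc22 : (22 + 5 * c) * (1 + k + nn) = -H := by
    rw [hH]; linear_combination 5 * hcd
  have hl : lam * (7 * (1 + 2 * nn) * (-1 - k + 2 * k * nn + 2 * nn ^ 2)
            * (-1 + nn + 2 * k * nn + 2 * nn ^ 2) * G * H) = -(1 + k + nn) * F := by
    rw [hlam]
    exact div_mul_cancel₀ _ (by
      refine mul_ne_zero (mul_ne_zero (mul_ne_zero (mul_ne_zero (mul_ne_zero ?_ hn0) h2) h3) hGne) hHne
      norm_num)
  obtain ⟨m, hm⟩ : ∃ m, m = 7 * lam * (c - 1) * (22 + 5 * c) := ⟨_, rfl⟩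
  have hmG : m * ((1 + k + nn) * G) = -F := by
    apply mul_left_cancel₀ h1
    rw [hm]
    linear_combination hl + 7 * lam * G * (22 + 5 * c) * (1 + k + nn) * hc1
      - 7 * lam * G * ((1 + 2 * nn) * (-1 - k + 2 * k * nn + 2 * nn ^ 2)
            * (-1 + nn + 2 * k * nn + 2 * nn ^ 2)) * hc22
  have hp : pC nn c lam = fC c nn
      + m * (-2 * (2 * c - 1) * (nn - 2) * (nn - 1)
        * (3 * c + 10 * nn + 2 * c * nn + 12 * nn ^ 2)
        * (5 * c + 28 * nn + 2 * c * nn + 40 * nn ^ 2))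
      + m ^ 2 * (21 * c ^ 2 + 70 * c * nn - 14 * c ^ 2 * nn + 200 * nn ^ 2 - 135 * c * nn ^ 2
      - 26 * c ^ 2 * nn ^ 2 + 380 * nn ^ 3 - 176 * c * nn ^ 3 + 8 * c ^ 2 * nn ^ 3
      + 436 * nn ^ 4 + 132 * c * nn ^ 4 + 8 * c ^ 2 * nn ^ 4 + 448 * nn ^ 5
      + 112 * c * nn ^ 5 + 336 * nn ^ 6) := by
    rw [hm]; unfold pC gC hC; ring
  have hm' : m = -F / ((1 + k + nn) * G) := by
    rw [eq_div_iff (mul_ne_zero h1 hGne), hmG]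
  rw [hp, hm', hc]
  unfold fC
  clear hp hm' hmG hm hl hc22 hc1 hcd hlam hc hHne h2 h3 hH
  obtain ⟨d, hd⟩ : ∃ d, d = 1 + k + nn := ⟨_, rfl⟩
  rw [← hd] at h1 ⊢
  field_simp
  obtain rfl : k = d - 1 - nn := by rw [hd]; ring
  rw [hG, hF]
  ring
end

section
/- Let n ≥ 2 be an integer and k ∈ ℂ. Define G = −20 + 19k − 6k^2 + 46n − 36kn + 4k^2 n − 32n^2 + 4k^2 n^2 − 16n^3 + 16kn^3 + 16n^4, H = 22 − 22k − 44n − 15kn + 10k^2 n + 30n^2 − 50kn^2 + 30k^2 n^2 − 60n^3 + 40kn^3 + 20k^2 n^3 − 40n^4 + 80kn^4 + 80n^5, and F = 56 − 66k − 2k^2 + 12k^3 − 500n + 1080kn − 941k^2 n + 348k^3 n − 36k^4 n + 760n^2 − 792kn^2 − 322k^2 n^2 + 514k^3 n^2 − 100k^4 n^2 + 1476n^3 − 4024kn^3 + 2948k^2 n^3 − 480k^3 n^3 − 40k^4 n^3 − 3656n^4 + 3672kn^4 + 240k^2 n^4 − 600k^3 n^4 + 40k^4 n^4 + 496n^5 +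 3008kn^5 − 2256k^2 n^5 + 192k^3 n^5 + 16k^4 n^5 + 2816n^6 − 3104kn^6 + 192k^2 n^6 + 128k^3 n^6 − 1344n^7 − 256kn^7 + 384k^2 n^7 − 384n^8 + 512kn^8 + 256n^9. Assume k+2n−1 ≠ 0, −1+k+kn+2n^2 ≠ 0, 1−4n+2kn+4n^2 ≠ 0, G ≠ 0, and H ≠ 0. Set c = −n(−3+2k+2kn+4n^2)(k−2n+2kn+4n^2)/(k+2n−1) and λ = −(k+2n−1)·F / (7(1+2n)(−1+k+kn+2n^2)(1−4n+2kn+4n^2)·G·H). Then p_n(c,λ) = 0, i.e. f(c,n) + λ·g(c,n) + λ^2·h(c,n) = 0. -/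
set_option maxHeartbeats 8000000 in
/-- The key polynomial identity, after clearing denominators (`c = N / d`). -/
theorem key_identity (k n d N G F : ℂ) (hd : d = k + 2 * n - 1)
    (hN : N = -n * (-3 + 2 * k + 2 * k * n + 4 * n ^ 2) * (k - 2 * n + 2 * k * n + 4 * n ^ 2))
    (hG : G = -20 + 19 * k - 6 * k ^ 2 + 46 * n - 36 * k * n + 4 * k ^ 2 * n
      - 32 * n ^ 2 + 4 * k ^ 2 * n ^ 2 - 16 * n ^ 3 + 16 * k * n ^ 3 + 16 * n ^ 4)
    (hF : F = 56 - 66 * k - 2 * k ^ 2 + 12 * k ^ 3 - 500 * n + 1080 * k * n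
      - 941 * k ^ 2 * n + 348 * k ^ 3 * n - 36 * k ^ 4 * n + 760 * n ^ 2
      - 792 * k * n ^ 2 - 322 * k ^ 2 * n ^ 2 + 514 * k ^ 3 * n ^ 2
      - 100 * k ^ 4 * n ^ 2 + 1476 * n ^ 3 - 4024 * k * n ^ 3
      + 2948 * k ^ 2 * n ^ 3 - 480 * k ^ 3 * n ^ 3 - 40 * k ^ 4 * n ^ 3
      - 3656 * n ^ 4 + 3672 * k * n ^ 4 + 240 * k ^ 2 * n ^ 4
      - 600 * k ^ 3 * n ^ 4 + 40 * k ^ 4 * n ^ 4 + 496 * n ^ 5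
      + 3008 * k * n ^ 5 - 2256 * k ^ 2 * n ^ 5 + 192 * k ^ 3 * n ^ 5
      + 16 * k ^ 4 * n ^ 5 + 2816 * n ^ 6 - 3104 * k * n ^ 6
      + 192 * k ^ 2 * n ^ 6 + 128 * k ^ 3 * n ^ 6 - 1344 * n ^ 7
      - 256 * k * n ^ 7 + 384 * k ^ 2 * n ^ 7 - 384 * n ^ 8
      + 512 * k * n ^ 8 + 256 * n ^ 9) :
    G ^ 2 * (-204 * N ^ 2 * d ^ 2
      - 192 * N ^ 3 * d ^ 1
      + 171 * N ^ 4
      + 952 * N * n * d ^ 3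
      - 4612 * N ^ 2 * n * d ^ 2
      + 2348 * N ^ 3 * n * d ^ 1
      - 38 * N ^ 4 * n
      + 1568 * n ^ 2 * d ^ 4
      - 7708 * N * n ^ 2 * d ^ 3
      + 1788 * N ^ 2 * n ^ 2 * d ^ 2
      + 2401 * N ^ 3 * n ^ 2 * d ^ 1
      - 74 * N ^ 4 * n ^ 2
      + 560 * n ^ 3 * d ^ 4
      - 18936 * N * n ^ 3 * d ^ 3
      + 22280 * N ^ 2 * n ^ 3 * d ^ 2
      - 2112 * N ^ 3 * n ^ 3 * d ^ 1
      + 8 * N ^ 4 * n ^ 3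
      - 16304 * n ^ 4 * d ^ 4
      + 18640 * N * n ^ 4 * d ^ 3
      + 3420 * N ^ 2 * n ^ 4 * d ^ 2
      - 364 * N ^ 3 * n ^ 4 * d ^ 1
      + 8 * N ^ 4 * n ^ 4
      - 17408 * n ^ 5 * d ^ 4
      + 27680 * N * n ^ 5 * d ^ 3
      - 10576 * N ^ 2 * n ^ 5 * d ^ 2
      + 304 * N ^ 3 * n ^ 5 * d ^ 1
      - 3264 * n ^ 6 * d ^ 4
      - 3072 * N * n ^ 6 * d ^ 3
      + 2736 * N ^ 2 * n ^ 6 * d ^ 2)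
    + 2 * F * G * ((2 * N - d) * (n - 2) * (n - 1)
      * (3 * N + 10 * n * d + 2 * N * n + 12 * n ^ 2 * d)
      * (5 * N + 28 * n * d + 2 * N * n + 40 * n ^ 2 * d))
    + F ^ 2 * (21 * N ^ 2
      + 70 * N * n * d ^ 1
      - 14 * N ^ 2 * n
      + 200 * n ^ 2 * d ^ 2
      - 135 * N * n ^ 2 * d ^ 1
      - 26 * N ^ 2 * n ^ 2
      + 380 * n ^ 3 * d ^ 2
      - 176 * N * n ^ 3 * d ^ 1
      + 8 * N ^ 2 * n ^ 3
      + 436 * n ^ 4 * d ^ 2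
      + 132 * N * n ^ 4 * d ^ 1
      + 8 * N ^ 2 * n ^ 4
      + 448 * n ^ 5 * d ^ 2
      + 112 * N * n ^ 5 * d ^ 1
      + 336 * n ^ 6 * d ^ 2) = 0 := by
  obtain ⟨G₂, hG₂⟩ : ∃ x : ℂ, x = - 10 * n ^ 2 - 23 * n ^ 3 + 64 * n ^ 4 + 192 * n ^ 5
        - 24 * n ^ 6 - 432 * n ^ 7 - 320 * n ^ 8 + 128 * n ^ 9
        + 128 * n ^ 10 + 21 * k ^ 1 * n ^ 2 + 95 * k ^ 1 * n ^ 3 + 46 * k ^ 1 * n ^ 4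
        - 356 * k ^ 1 * n ^ 5 - 584 * k ^ 1 * n ^ 6 - 128 * k ^ 1 * n ^ 7 + 256 * k ^ 1 * n ^ 8
        + 128 * k ^ 1 * n ^ 9 - 14 * k ^ 2 * n ^ 2 - 84 * k ^ 2 * n ^ 3 - 174 * k ^ 2 * n ^ 4
        - 120 * k ^ 2 * n ^ 5 + 48 * k ^ 2 * n ^ 6 + 96 * k ^ 2 * n ^ 7 + 32 * k ^ 2 * n ^ 8 := ⟨_, rfl⟩
  obtain ⟨F₂, hF₂⟩ : ∃ x : ℂ, x = 28 * n ^ 2 + 138 * n ^ 3 - 620 * n ^ 4 - 1810 * n ^ 5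
        + 4676 * n ^ 6 + 9144 * n ^ 7 - 15488 * n ^ 8 - 22400 * n ^ 9
        + 22400 * n ^ 10 + 27136 * n ^ 11 - 11264 * n ^ 12 - 13824 * n ^ 13
        + 1024 * n ^ 14 + 2048 * n ^ 15 - 130 * k ^ 1 * n ^ 2 - 532 * k ^ 1 * n ^ 3
        + 1727 * k ^ 1 * n ^ 4 + 7036 * k ^ 1 * n ^ 5 - 7040 * k ^ 1 * n ^ 6 - 33360 * k ^ 1 * n ^ 7
        + 5376 * k ^ 1 * n ^ 8 + 65728 * k ^ 1 * n ^ 9 + 19456 * k ^ 1 * n ^ 10 - 44800 * k ^ 1 * n ^ 11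
        - 23296 * k ^ 1 * n ^ 12 + 6144 * k ^ 1 * n ^ 13 + 4096 * k ^ 1 * n ^ 14 + 170 * k ^ 2 * n ^ 2
        + 671 * k ^ 2 * n ^ 3 - 1749 * k ^ 2 * n ^ 4 - 9546 * k ^ 2 * n ^ 5 - 1512 * k ^ 2 * n ^ 6
        + 34056 * k ^ 2 * n ^ 7 + 34000 * k ^ 2 * n ^ 8 - 23840 * k ^ 2 * n ^ 9 - 45312 * k ^ 2 * n ^ 10
        - 11136 * k ^ 2 * n ^ 11 + 7680 * k ^ 2 * n ^ 12 + 3072 * k ^ 2 * n ^ 13 - 68 * k ^ 3 * n ^ 2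
        - 180 * k ^ 3 * n ^ 3 + 1392 * k ^ 3 * n ^ 4 + 6796 * k ^ 3 * n ^ 5 + 8108 * k ^ 3 * n ^ 6
        - 6624 * k ^ 3 * n ^ 7 - 22624 * k ^ 3 * n ^ 8 - 16320 * k ^ 3 * n ^ 9 - 576 * k ^ 3 * n ^ 10
        + 3584 * k ^ 3 * n ^ 11 + 1024 * k ^ 3 * n ^ 12 - 76 * k ^ 4 * n ^ 3 - 684 * k ^ 4 * n ^ 4
        - 2492 * k ^ 4 * n ^ 5 - 4644 * k ^ 4 * n ^ 6 - 4488 * k ^ 4 * n ^ 7 - 1728 * k ^ 4 * n ^ 8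
        + 448 * k ^ 4 * n ^ 9 + 576 * k ^ 4 * n ^ 10 + 128 * k ^ 4 * n ^ 11 := ⟨_, rfl⟩
  have i1 : 21 * N ^ 2
      + 70 * N * n * d ^ 1
      - 14 * N ^ 2 * n
      + 200 * n ^ 2 * d ^ 2
      - 135 * N * n ^ 2 * d ^ 1
      - 26 * N ^ 2 * n ^ 2
      + 380 * n ^ 3 * d ^ 2
      - 176 * N * n ^ 3 * d ^ 1
      + 8 * N ^ 2 * n ^ 3
      + 436 * n ^ 4 * d ^ 2
      + 132 * N * n ^ 4 * d ^ 1
      + 8 * N ^ 2 * n ^ 4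
      + 448 * n ^ 5 * d ^ 2
      + 112 * N * n ^ 5 * d ^ 1
      + 336 * n ^ 6 * d ^ 2 = G * G₂ := by
    rw [hG, hG₂, hN, hd]; ring
  have i2 : -204 * N ^ 2 * d ^ 2
      - 192 * N ^ 3 * d ^ 1
      + 171 * N ^ 4
      + 952 * N * n * d ^ 3
      - 4612 * N ^ 2 * n * d ^ 2
      + 2348 * N ^ 3 * n * d ^ 1
      - 38 * N ^ 4 * n
      + 1568 * n ^ 2 * d ^ 4
      - 7708 * N * n ^ 2 * d ^ 3
      + 1788 * N ^ 2 * n ^ 2 * d ^ 2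
      + 2401 * N ^ 3 * n ^ 2 * d ^ 1
      - 74 * N ^ 4 * n ^ 2
      + 560 * n ^ 3 * d ^ 4
      - 18936 * N * n ^ 3 * d ^ 3
      + 22280 * N ^ 2 * n ^ 3 * d ^ 2
      - 2112 * N ^ 3 * n ^ 3 * d ^ 1
      + 8 * N ^ 4 * n ^ 3
      - 16304 * n ^ 4 * d ^ 4
      + 18640 * N * n ^ 4 * d ^ 3
      + 3420 * N ^ 2 * n ^ 4 * d ^ 2
      - 364 * N ^ 3 * n ^ 4 * d ^ 1
      + 8 * N ^ 4 * n ^ 4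
      - 17408 * n ^ 5 * d ^ 4
      + 27680 * N * n ^ 5 * d ^ 3
      - 10576 * N ^ 2 * n ^ 5 * d ^ 2
      + 304 * N ^ 3 * n ^ 5 * d ^ 1
      - 3264 * n ^ 6 * d ^ 4
      - 3072 * N * n ^ 6 * d ^ 3
      + 2736 * N ^ 2 * n ^ 6 * d ^ 2 = F * F₂ := by
    rw [hF, hF₂, hN, hd]; ring
  have i3 : G * F₂ + 2 * ((2 * N - d) * (n - 2) * (n - 1)
      * (3 * N + 10 * n * d + 2 * N * n + 12 * n ^ 2 * d)
      * (5 * N + 28 * n * d + 2 * N * n + 40 * n ^ 2 * d)) + F * G₂ = 0 := by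
    rw [hF, hF₂, hG, hG₂, hN, hd]; ring
  rw [i1, i2]
  linear_combination (F * G) * i3

/-- The rational parametrization of the truncation curve `V(I_n)` by the level `k`
of the type-B principal W-algebra `W^k(so_{2n+1}, f_prin)` lies on `{p_n = 0}`. -/
theorem typeB_parametrization_on_curve (n : ℤ) (hn : 2 ≤ n) (k : ℂ)
    (nn : ℂ) (hnn : nn = (n : ℂ))
    (G H F c lam : ℂ)
    (hG : G = -20 + 19 * k - 6 * k ^ 2 + 46 * nn - 36 * k * nn + 4 * k ^ 2 * nn
      - 32 * nn ^ 2 + 4 * k ^ 2 * nn ^ 2 - 16 * nn ^ 3 + 16 * k * nn ^ 3 + 16 * nn ^ 4)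
    (hH : H = 22 - 22 * k - 44 * nn - 15 * k * nn + 10 * k ^ 2 * nn + 30 * nn ^ 2
      - 50 * k * nn ^ 2 + 30 * k ^ 2 * nn ^ 2 - 60 * nn ^ 3 + 40 * k * nn ^ 3
      + 20 * k ^ 2 * nn ^ 3 - 40 * nn ^ 4 + 80 * k * nn ^ 4 + 80 * nn ^ 5)
    (hF : F = 56 - 66 * k - 2 * k ^ 2 + 12 * k ^ 3 - 500 * nn + 1080 * k * nn
      - 941 * k ^ 2 * nn + 348 * k ^ 3 * nn - 36 * k ^ 4 * nn + 760 * nn ^ 2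
      - 792 * k * nn ^ 2 - 322 * k ^ 2 * nn ^ 2 + 514 * k ^ 3 * nn ^ 2
      - 100 * k ^ 4 * nn ^ 2 + 1476 * nn ^ 3 - 4024 * k * nn ^ 3
      + 2948 * k ^ 2 * nn ^ 3 - 480 * k ^ 3 * nn ^ 3 - 40 * k ^ 4 * nn ^ 3
      - 3656 * nn ^ 4 + 3672 * k * nn ^ 4 + 240 * k ^ 2 * nn ^ 4
      - 600 * k ^ 3 * nn ^ 4 + 40 * k ^ 4 * nn ^ 4 + 496 * nn ^ 5
      + 3008 * k * nn ^ 5 - 2256 * k ^ 2 * nn ^ 5 + 192 * k ^ 3 * nn ^ 5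
      + 16 * k ^ 4 * nn ^ 5 + 2816 * nn ^ 6 - 3104 * k * nn ^ 6
      + 192 * k ^ 2 * nn ^ 6 + 128 * k ^ 3 * nn ^ 6 - 1344 * nn ^ 7
      - 256 * k * nn ^ 7 + 384 * k ^ 2 * nn ^ 7 - 384 * nn ^ 8
      + 512 * k * nn ^ 8 + 256 * nn ^ 9)
    (h1 : k + 2 * nn - 1 ≠ 0)
    (h2 : -1 + k + k * nn + 2 * nn ^ 2 ≠ 0)
    (h3 : 1 - 4 * nn + 2 * k * nn + 4 * nn ^ 2 ≠ 0)
    (hGne : G ≠ 0) (hHne : H ≠ 0)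
    (hc : c = -nn * (-3 + 2 * k + 2 * k * nn + 4 * nn ^ 2)
        * (k - 2 * nn + 2 * k * nn + 4 * nn ^ 2) / (k + 2 * nn - 1))
    (hlam : lam = -(k + 2 * nn - 1) * F
        / (7 * (1 + 2 * nn) * (-1 + k + k * nn + 2 * nn ^ 2)
            * (1 - 4 * nn + 2 * k * nn + 4 * nn ^ 2) * G * H)) :
    pC nn c lam = 0 := by
  have h0 : (1 + 2 * nn : ℂ) ≠ 0 := by
    rw [hnn]
    have : (1 + 2 * n : ℤ) ≠ 0 := by omega
    exact_mod_cast this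
  obtain ⟨d, hd⟩ : ∃ d, d = k + 2 * nn - 1 := ⟨_, rfl⟩
  obtain ⟨N, hN⟩ : ∃ N, N = -nn * (-3 + 2 * k + 2 * k * nn + 4 * nn ^ 2)
        * (k - 2 * nn + 2 * k * nn + 4 * nn ^ 2) := ⟨_, rfl⟩
  have key := key_identity k nn d N G F hd hN hG hF
  rw [← hd] at h1 hc hlam
  rw [← hN] at hc
  have e1 : d * (c - 1) = -((-1 + k + k * nn + 2 * nn ^ 2)
      * (1 - 4 * nn + 2 * k * nn + 4 * nn ^ 2) * (1 + 2 * nn)) := by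
    rw [hc, mul_sub, mul_div_cancel₀ _ h1, hN, hd]; ring
  have e2 : d * (22 + 5 * c) = -H := by
    have : d * c = N := by rw [hc, mul_div_cancel₀ _ h1]
    linear_combination 5 * this + 22 * hd + 5 * hN + hH
  have e3 : 7 * lam * (c - 1) * (22 + 5 * c) * (d * G) = -F := by
    apply mul_left_cancel₀ h1
    have : d * (7 * lam * (c - 1) * (22 + 5 * c) * (d * G))
      = 7 * lam * G * (d * (c - 1)) * (d * (22 + 5 * c)) := by ring
    rw [this, e1, e2, hlam]
    generalize -1 + k + k * nn + 2 * nn ^ 2 = A at h2 ⊢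
    generalize 1 - 4 * nn + 2 * k * nn + 4 * nn ^ 2 = B at h3 ⊢
    field_simp
  have ec : d * c = N := by rw [hc, mul_div_cancel₀ _ h1]
  obtain ⟨m, hm⟩ : ∃ m, m = 7 * lam * (c - 1) * (22 + 5 * c) := ⟨_, rfl⟩
  rw [← hm] at e3
  have hF' : F = -(m * (d * G)) := by rw [e3]; ring
  have hp : pC nn c lam = fC c nn
      - 2 * m * ((2 * c - 1) * (nn - 2) * (nn - 1)
        * (3 * c + 10 * nn + 2 * c * nn + 12 * nn ^ 2)
        * (5 * c + 28 * nn + 2 * c * nn + 40 * nn ^ 2))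
      + m ^ 2 * (21 * c ^ 2 + 70 * c * nn - 14 * c ^ 2 * nn + 200 * nn ^ 2 - 135 * c * nn ^ 2
      - 26 * c ^ 2 * nn ^ 2 + 380 * nn ^ 3 - 176 * c * nn ^ 3 + 8 * c ^ 2 * nn ^ 3
      + 436 * nn ^ 4 + 132 * c * nn ^ 4 + 8 * c ^ 2 * nn ^ 4 + 448 * nn ^ 5
      + 112 * c * nn ^ 5 + 336 * nn ^ 6) := by
    unfold pC gC hC
    rw [hm]; ring
  have hne : d ^ 4 * G ^ 2 ≠ 0 := mul_ne_zero (pow_ne_zero _ h1) (pow_ne_zero _ hGne)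
  apply mul_left_cancel₀ hne
  rw [mul_zero, hp, ← key, hF', ← ec]
  unfold fC
  ring
end

section
/- Let n ≥ 3 be an integer and t ∈ ℂ. Define G = −40 + 22n + 60n^2 − 64n^3 + 16n^4 + 29t − 40n^2 t + 16n^3 t − 6t^2 − 4n t^2 + 4n^2 t^2, H = 44 + 56n − 400n^2 + 580n^3 − 360n^4 + 80n^5 − 22t − 65nt + 220n^2 t − 240n^3 t + 80n^4 t + 10n t^2 − 30n^2 t^2 + 20n^3 t^2, and F = −352 + 1608n + 1200n^2 − 11792n^3 + 15800n^4 − 3904n^5 − 7296n^6 + 6656n^7 − 2176n^8 + 256n^9 + 388t − 992nt − 5486n^2 t + 17312n^3 t − 13688n^4 t − 2368n^5 t + 7936n^6 t − 3584n^7 t + 512n^8 t − 130t^2 − 221n t^2 + 4352n^2 t^2 − 7772n^3 t^2 + 2640n^4 t^2 + 2784n^5 t^2 − 2112n^6 t^2 + 384n^7 t^2 + 12t^3 + 228n t^3 − 1186n^2 t^3 + 1200n^3 t^3 + 160n^4 t^3 − 512n^5 t^3 + 128n^6 t^3 − 36n t^4 + 100n^2 t^4 − 40n^3 t^4 − 40n^4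 t^4 + 16n^5 t^4. Assume t + 2n − 2 ≠ 0, 1 − 6n + 4n^2 + 2nt ≠ 0, 2 − 8n + 4n^2 − t + 2nt ≠ 0, G ≠ 0, and H ≠ 0. Set c = −n(5 − 10n + 4n^2 − 2t + 2nt)(4 − 8n + 4n^2 − t + 2nt)/(t + 2n − 2) and λ = −(2n + t − 2)·F / (7(n−1)(1 − 6n + 4n^2 + 2nt)(2 − 8n + 4n^2 − t + 2nt)·G·H). Then q_n(c,λ) = 0. -/
/-- The type-D truncation polynomial `q_n(c,λ)`. -/
noncomputable def qD (n c lam : ℂ) : ℂ :=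
  7 * lam * (c - 1) * (22 + 5 * c)
      * (-3 * c + 10 * n - 2 * c * n - 19 * n ^ 2 + 2 * c * n ^ 2 + 12 * n ^ 3)
    - (-6 * c - 9 * c ^ 2 - 28 * n + 120 * c * n - 2 * c ^ 2 * n + 10 * n ^ 2
        - 147 * c * n ^ 2 + 2 * c ^ 2 * n ^ 2 + 24 * n ^ 3 + 36 * c * n ^ 3)

/-- The rational parametrization of the truncation curve `V(J_n)` by the level `t`
of the orbifold `W^t(so_{2n}, f_prin)^{ℤ₂}` lies on `{q_n = 0}`. -/
theorem typeDorbifold_parametrization_on_curve (n : ℤ) (hn : 3 ≤ n) (t : ℂ)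
    (nn : ℂ) (hnn : nn = (n : ℂ))
    (G H F c lam : ℂ)
    (hG : G = -40 + 22 * nn + 60 * nn ^ 2 - 64 * nn ^ 3 + 16 * nn ^ 4 + 29 * t
      - 40 * nn ^ 2 * t + 16 * nn ^ 3 * t - 6 * t ^ 2 - 4 * nn * t ^ 2
      + 4 * nn ^ 2 * t ^ 2)
    (hH : H = 44 + 56 * nn - 400 * nn ^ 2 + 580 * nn ^ 3 - 360 * nn ^ 4
      + 80 * nn ^ 5 - 22 * t - 65 * nn * t + 220 * nn ^ 2 * t - 240 * nn ^ 3 * t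
      + 80 * nn ^ 4 * t + 10 * nn * t ^ 2 - 30 * nn ^ 2 * t ^ 2
      + 20 * nn ^ 3 * t ^ 2)
    (hF : F = -352 + 1608 * nn + 1200 * nn ^ 2 - 11792 * nn ^ 3 + 15800 * nn ^ 4
      - 3904 * nn ^ 5 - 7296 * nn ^ 6 + 6656 * nn ^ 7 - 2176 * nn ^ 8
      + 256 * nn ^ 9 + 388 * t - 992 * nn * t - 5486 * nn ^ 2 * t
      + 17312 * nn ^ 3 * t - 13688 * nn ^ 4 * t - 2368 * nn ^ 5 * t
      + 7936 * nn ^ 6 * t - 3584 * nn ^ 7 * t + 512 * nn ^ 8 * t - 130 * t ^ 2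
      - 221 * nn * t ^ 2 + 4352 * nn ^ 2 * t ^ 2 - 7772 * nn ^ 3 * t ^ 2
      + 2640 * nn ^ 4 * t ^ 2 + 2784 * nn ^ 5 * t ^ 2 - 2112 * nn ^ 6 * t ^ 2
      + 384 * nn ^ 7 * t ^ 2 + 12 * t ^ 3 + 228 * nn * t ^ 3
      - 1186 * nn ^ 2 * t ^ 3 + 1200 * nn ^ 3 * t ^ 3 + 160 * nn ^ 4 * t ^ 3
      - 512 * nn ^ 5 * t ^ 3 + 128 * nn ^ 6 * t ^ 3 - 36 * nn * t ^ 4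
      + 100 * nn ^ 2 * t ^ 4 - 40 * nn ^ 3 * t ^ 4 - 40 * nn ^ 4 * t ^ 4
      + 16 * nn ^ 5 * t ^ 4)
    (h1 : t + 2 * nn - 2 ≠ 0)
    (h2 : 1 - 6 * nn + 4 * nn ^ 2 + 2 * nn * t ≠ 0)
    (h3 : 2 - 8 * nn + 4 * nn ^ 2 - t + 2 * nn * t ≠ 0)
    (hGne : G ≠ 0) (hHne : H ≠ 0)
    (hc : c = -nn * (5 - 10 * nn + 4 * nn ^ 2 - 2 * t + 2 * nn * t)
        * (4 - 8 * nn + 4 * nn ^ 2 - t + 2 * nn * t) / (t + 2 * nn - 2))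
    (hlam : lam = -(2 * nn + t - 2) * F
        / (7 * (nn - 1) * (1 - 6 * nn + 4 * nn ^ 2 + 2 * nn * t)
            * (2 - 8 * nn + 4 * nn ^ 2 - t + 2 * nn * t) * G * H)) :
    qD nn c lam = 0 := by
  have hn1 : nn - 1 ≠ 0 := by
    rw [hnn]
    have : (n : ℂ) ≠ 1 := by
      exact_mod_cast (by omega : n ≠ 1)
    exact sub_ne_zero.mpr this
  have e1 : c - 1 = -((nn - 1) * (1 - 6 * nn + 4 * nn ^ 2 + 2 * nn * t)
      * (2 - 8 * nn + 4 * nn ^ 2 - t + 2 * nn * t)) / (t + 2 * nn - 2) := by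
    rw [hc, eq_div_iff h1, sub_mul, div_mul_cancel₀ _ h1]
    ring
  have e2 : 22 + 5 * c = -H / (t + 2 * nn - 2) := by
    rw [hc, hH, eq_div_iff h1, add_mul, mul_assoc 5, div_mul_cancel₀ _ h1]
    ring
  have hcD : c * (t + 2 * nn - 2) = -nn * (5 - 10 * nn + 4 * nn ^ 2 - 2 * t + 2 * nn * t)
        * (4 - 8 * nn + 4 * nn ^ 2 - t + 2 * nn * t) := by
    rw [hc, div_mul_cancel₀ _ h1]
  have e3 : -3 * c + 10 * nn - 2 * c * nn - 19 * nn ^ 2 + 2 * c * nn ^ 2 + 12 * nn ^ 3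
      = -(nn * (nn - 1) * (2 * nn - 1) * G) / (t + 2 * nn - 2) := by
    rw [eq_div_iff h1, hG]
    linear_combination (-3 - 2 * nn + 2 * nn ^ 2) * hcD
  have e4 : -6 * c - 9 * c ^ 2 - 28 * nn + 120 * c * nn - 2 * c ^ 2 * nn + 10 * nn ^ 2
        - 147 * c * nn ^ 2 + 2 * c ^ 2 * nn ^ 2 + 24 * nn ^ 3 + 36 * c * nn ^ 3
      = nn * (nn - 1) * (2 * nn - 1) * F / (t + 2 * nn - 2) ^ 2 := by
    rw [eq_div_iff (pow_ne_zero 2 h1), hF]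
    linear_combination ((-6 + 120 * nn - 147 * nn ^ 2 + 36 * nn ^ 3) * (t + 2 * nn - 2)
      + (-9 - 2 * nn + 2 * nn ^ 2) * (c * (t + 2 * nn - 2)
        + -nn * (5 - 10 * nn + 4 * nn ^ 2 - 2 * t + 2 * nn * t)
        * (4 - 8 * nn + 4 * nn ^ 2 - t + 2 * nn * t))) * hcD
  have hD : 2 * nn + t - 2 = t + 2 * nn - 2 := by ring
  unfold qD
  rw [e1, e2, e3, e4, hlam, hD]
  clear e1 e2 e3 e4 hlam hcD hc hG hH hF hD
  generalize t + 2 * nn - 2 = D at *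
  generalize 1 - 6 * nn + 4 * nn ^ 2 + 2 * nn * t = A at *
  generalize 2 - 8 * nn + 4 * nn ^ 2 - t + 2 * nn * t = B at *
  generalize nn - 1 = M at *
  field_simp
  ring
end

section
/- Let n, m be integers with 3 ≤ n < m. Define G = −10 + 19m − 12m^2 + 19n − 6mn − 8m^2 n − 12n^2 − 8mn^2 + 8m^2 n^2, H = 22 − 22m − 22n + 15mn − 20m^2 n − 20mn^2 + 20m^2 n^2, F = 28 − 38m − 14m^2 + 24m^3 − 38n − 364mn + 969m^2 n − 696m^3 n + 144m^4 n − 14n^2 + 969mn^2 − 1746m^2 n^2 + 828m^3 n^2 − 112m^4 n^2 + 24n^3 − 696mn^3 + 828m^2 n^3 − 32m^3 n^3 − 64m^4 n^3 + 144mn^4 − 112m^2 n^4 − 64m^3 n^4 + 32m^4 n^4, and set c* = −mn(3 − 4m − 4n + 4mn)/(m + n − 1) and λ* = −(m + n − 1)·F / (7(m−1)(n−1)(4mn−1)·G·H). Then G ≠ 0, H ≠ 0, and the solution set {(c,λ) ∈ ℂ × ℂ : q_n(c,λ) = 0 and q_m(c,λ) = 0} equals {(−24, −1/245), (1/2, −2/49),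 (c*, λ*)}. -/
/-- For `3 ≤ n < m`, the intersection of the truncation curves `V(J_n)` and
`V(J_m)` consists of exactly the three points `(-24, -1/245)`, `(1/2, -2/49)`
and `(c*, λ*)`. -/
theorem typeD_truncation_curves_intersection (n m : ℤ) (hn : 3 ≤ n) (hnm : n < m)
    (nn mm : ℂ) (hnn : nn = (n : ℂ)) (hmm : mm = (m : ℂ))
    (G H F cs ls : ℂ)
    (hG : G = -10 + 19 * mm - 12 * mm ^ 2 + 19 * nn - 6 * mm * nn
      - 8 * mm ^ 2 * nn - 12 * nn ^ 2 - 8 * mm * nn ^ 2 + 8 * mm ^ 2 * nn ^ 2)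
    (hH : H = 22 - 22 * mm - 22 * nn + 15 * mm * nn - 20 * mm ^ 2 * nn
      - 20 * mm * nn ^ 2 + 20 * mm ^ 2 * nn ^ 2)
    (hF : F = 28 - 38 * mm - 14 * mm ^ 2 + 24 * mm ^ 3 - 38 * nn - 364 * mm * nn
      + 969 * mm ^ 2 * nn - 696 * mm ^ 3 * nn + 144 * mm ^ 4 * nn - 14 * nn ^ 2
      + 969 * mm * nn ^ 2 - 1746 * mm ^ 2 * nn ^ 2 + 828 * mm ^ 3 * nn ^ 2
      - 112 * mm ^ 4 * nn ^ 2 + 24 * nn ^ 3 - 696 * mm * nn ^ 3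
      + 828 * mm ^ 2 * nn ^ 3 - 32 * mm ^ 3 * nn ^ 3 - 64 * mm ^ 4 * nn ^ 3
      + 144 * mm * nn ^ 4 - 112 * mm ^ 2 * nn ^ 4 - 64 * mm ^ 3 * nn ^ 4
      + 32 * mm ^ 4 * nn ^ 4)
    (hcs : cs = -mm * nn * (3 - 4 * mm - 4 * nn + 4 * mm * nn) / (mm + nn - 1))
    (hls : ls = -(mm + nn - 1) * F
        / (7 * (mm - 1) * (nn - 1) * (4 * mm * nn - 1) * G * H)) :
    G ≠ 0 ∧ H ≠ 0 ∧
      {p : ℂ × ℂ | qD nn p.1 p.2 = 0 ∧ qD mm p.1 p.2 = 0}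
        = ({((-24 : ℂ), (-1/245 : ℂ)), ((1/2 : ℂ), (-2/49 : ℂ)), (cs, ls)} :
            Set (ℂ × ℂ)) := by
  have hn1 : nn - 1 ≠ 0 := by
    rw [hnn]; have : n - 1 ≠ 0 := by omega
    exact_mod_cast this
  have hm1 : mm - 1 ≠ 0 := by
    rw [hmm]; have : m - 1 ≠ 0 := by omega
    exact_mod_cast this
  have hn0 : nn ≠ 0 := by
    rw [hnn]; have : n ≠ 0 := by omega
    exact_mod_cast this
  have hs : mm + nn - 1 ≠ 0 := by
    rw [hnn, hmm]; have : m + n - 1 ≠ 0 := by omega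
    exact_mod_cast this
  have hd : mm - nn ≠ 0 := by
    rw [hnn, hmm]; have : m - n ≠ 0 := by omega
    exact_mod_cast this
  have h2n : 2 * nn - 1 ≠ 0 := by
    rw [hnn]; have : 2 * n - 1 ≠ 0 := by omega
    exact_mod_cast this
  have hmn : 4 * mm * nn - 1 ≠ 0 := by
    rw [hnn, hmm]; have : 4 * m * n - 1 ≠ 0 := by
      have : 4 * m * n = 4 * (m * n) := by ring
      omega
    exact_mod_cast this
  obtain ⟨a, ha⟩ : ∃ a : ℕ, n = 3 + a := ⟨(n - 3).toNat, by omega⟩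
  obtain ⟨b, hb⟩ : ∃ b : ℕ, m = 4 + b := ⟨(m - 4).toNat, by omega⟩
  have hG0 : G ≠ 0 := by
    have h : (-10 + 19 * m - 12 * m ^ 2 + 19 * n - 6 * m * n
      - 8 * m ^ 2 * n - 12 * n ^ 2 - 8 * m * n ^ 2 + 8 * m ^ 2 * n ^ 2) ≠ 0 := by
      apply ne_of_gt
      rw [ha, hb]
      ring_nf
      positivity
    rw [hG, hnn, hmm]
    exact_mod_cast h
  have hH0 : H ≠ 0 := by
    have h : (22 - 22 * m - 22 * n + 15 * m * n - 20 * m ^ 2 * n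
      - 20 * m * n ^ 2 + 20 * m ^ 2 * n ^ 2) ≠ 0 := by
      apply ne_of_gt
      rw [ha, hb]
      ring_nf
      positivity
    rw [hH, hnn, hmm]
    exact_mod_cast h
  have hA24 : ∀ k : ℤ, 3 ≤ k → k ≠ 4 → (72 + 58 * (k : ℂ) - 67 * (k : ℂ) ^ 2 + 12 * (k : ℂ) ^ 3) ≠ 0 := by
    intro k hk hk4
    have h : 72 + 58 * k - 67 * k ^ 2 + 12 * k ^ 3 ≠ 0 := by
      have e : 72 + 58 * k - 67 * k ^ 2 + 12 * k ^ 3 = (k - 4) * (12 * k ^ 2 - 19 * k - 18) := by ring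
      rw [e]
      apply mul_ne_zero
      · omega
      · nlinarith
    exact_mod_cast h
  have hq24 : ∀ k l : ℂ, qD k (-24) l
      = (17150 * l + 70) * (72 + 58 * k - 67 * k ^ 2 + 12 * k ^ 3) := by
    intro k l; unfold qD; ring
  have hq12 : ∀ k l : ℂ, 4 * qD k (1/2) l = -(21 / 2) * (49 * l + 2) * (2 * k - 1) ^ 3 := by
    intro k l; unfold qD; ring
  have c1 : cs - 1 = -((mm - 1) * (nn - 1) * (4 * mm * nn - 1)) / (mm + nn - 1) := by
    rw [hcs]; field_simp; ring
  have c2 : 22 + 5 * cs = -H / (mm + nn - 1) := by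
    rw [hcs, hH]; field_simp; ring
  have hqs : ∀ l : ℂ, ∀ k k' : ℂ, (k = nn ∧ k' = mm) ∨ (k = mm ∧ k' = nn) →
      qD k cs l = -(k * (k - 1) / (mm + nn - 1) ^ 2) *
        (7 * l * (mm - 1) * (nn - 1) * (4 * mm * nn - 1) * G * H / (mm + nn - 1) + F) := by
    intro l k k' hk
    have e : qD k cs l = 7 * l * (cs - 1) * (22 + 5 * cs)
      * (-3 * cs + 10 * k - 2 * cs * k - 19 * k ^ 2 + 2 * cs * k ^ 2 + 12 * k ^ 3)
    - (-6 * cs - 9 * cs ^ 2 - 28 * k + 120 * cs * k - 2 * cs ^ 2 * k + 10 * k ^ 2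
        - 147 * cs * k ^ 2 + 2 * cs ^ 2 * k ^ 2 + 24 * k ^ 3 + 36 * cs * k ^ 3) := rfl
    have c3 : -3 * cs + 10 * k - 2 * cs * k - 19 * k ^ 2 + 2 * cs * k ^ 2 + 12 * k ^ 3
        = -(k * (k - 1) * G) / (mm + nn - 1) := by
      rw [hcs, hG]; rcases hk with ⟨rfl, rfl⟩ | ⟨rfl, rfl⟩ <;> field_simp <;> ring
    have c4 : -6 * cs - 9 * cs ^ 2 - 28 * k + 120 * cs * k - 2 * cs ^ 2 * k + 10 * k ^ 2
        - 147 * cs * k ^ 2 + 2 * cs ^ 2 * k ^ 2 + 24 * k ^ 3 + 36 * cs * k ^ 3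
        = k * (k - 1) * F / (mm + nn - 1) ^ 2 := by
      rw [hcs, hF]; rcases hk with ⟨rfl, rfl⟩ | ⟨rfl, rfl⟩ <;> field_simp <;> ring
    rw [e, c3, c4, c1, c2]; field_simp; ring
  have hden : 7 * (mm - 1) * (nn - 1) * (4 * mm * nn - 1) * G * H ≠ 0 := by
    simp only [ne_eq, mul_eq_zero, not_or]
    exact ⟨⟨⟨⟨⟨by norm_num, hm1⟩, hn1⟩, hmn⟩, hG0⟩, hH0⟩
  have hls' : 7 * ls * (mm - 1) * (nn - 1) * (4 * mm * nn - 1) * G * H / (mm + nn - 1) + F = 0 := by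
    have h := hls
    rw [eq_div_iff hden] at h
    field_simp
    linear_combination h
  refine ⟨hG0, hH0, ?_⟩
  ext ⟨c, l⟩
  simp only [Set.mem_ofPred_eq, Set.mem_insert_iff, Set.mem_singleton_iff, Prod.mk.injEq]
  constructor
  · rintro ⟨h1, h2⟩
    have hD : 6 * (mm - nn) * ((c + 24) * ((2 * c - 1) * ((mm + nn - 1) * c
        + mm * nn * (3 - 4 * mm - 4 * nn + 4 * mm * nn)))) = 0 := by
      unfold qD at h1 h2
      linear_combination (-3 * c + 10 * mm - 2 * c * mm - 19 * mm ^ 2 + 2 * c * mm ^ 2 + 12 * mm ^ 3) * h1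
        - (-3 * c + 10 * nn - 2 * c * nn - 19 * nn ^ 2 + 2 * c * nn ^ 2 + 12 * nn ^ 3) * h2
    have hD' := (mul_eq_zero.mp hD).resolve_left (mul_ne_zero (by norm_num) hd)
    rcases mul_eq_zero.mp hD' with hc | hD'
    · left
      have hc : c = -24 := by linear_combination hc
      subst hc
      refine ⟨rfl, ?_⟩
      rw [hq24] at h1 h2
      have : 17150 * l + 70 = 0 := by
        by_cases h4 : n = 4
        · exact (mul_eq_zero.mp h2).resolve_right (hmm ▸ hA24 m (by omega) (by omega))
        · exact (mul_eq_zero.mp h1).resolve_right (hnn ▸ hA24 n hn h4)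
      linear_combination this / 17150
    rcases mul_eq_zero.mp hD' with hc | hc
    · right; left
      have hc : c = 1 / 2 := by linear_combination hc / 2
      subst hc
      refine ⟨rfl, ?_⟩
      have h3 := hq12 nn l
      rw [h1] at h3
      have : (49 * l + 2) * (2 * nn - 1) ^ 3 = 0 := by linear_combination (2 / 21) * h3
      have := (mul_eq_zero.mp this).resolve_right (pow_ne_zero 3 h2n)
      linear_combination this / 49
    · right; right
      have hc : c = cs := by
        rw [hcs, eq_div_iff hs]; linear_combination hc
      subst hc
      refine ⟨rfl, ?_⟩
      rw [hqs l nn mm (Or.inl ⟨rfl, rfl⟩)] at h1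
      have h3 := (mul_eq_zero.mp h1).resolve_left
        (neg_ne_zero.mpr (div_ne_zero (mul_ne_zero hn0 hn1) (pow_ne_zero 2 hs)))
      rw [hls, eq_div_iff hden]
      field_simp at h3
      linear_combination h3
  · rintro (⟨rfl, rfl⟩ | ⟨rfl, rfl⟩ | ⟨rfl, rfl⟩)
    · rw [hq24, hq24]; constructor <;> ring
    · unfold qD; constructor <;> ring
    · rw [hqs _ nn mm (Or.inl ⟨rfl, rfl⟩), hqs _ mm nn (Or.inr ⟨rfl, rfl⟩), hls']
      simp
end

section
/- Let n, m be integers with 2 ≤ n < m. Define G = −10 − 21m − 14m^2 − 21n − 18mn − 14n^2 + 8m^2 n^2, H = −22 − 22m − 22n − 15mn − 10m^2 n − 10mn^2 + 20m^2 n^2, F = −28 − 130m − 170m^2 − 68m^3 − 130n − 372mn − 93m^2 n + 228m^3 n + 76m^4 n − 170n^2 − 93mn^2 + 610m^2 n^2 + 300m^3 n^2 − 152m^4 n^2 − 68n^3 + 228mn^3 + 300m^2 n^3 − 192m^3 n^3 − 16m^4 n^3 + 76mn^4 − 152m^2 n^4 − 16m^3 n^4 + 32m^4 n^4, and set c* =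 −mn(4mn − 2m − 2n − 3)/(1 + m + n) and λ* = −(1 + m + n)·F / (7(2mn − m − 1)(2mn − n − 1)·G·H). Then G ≠ 0, H ≠ 0, and p_n(c*, λ*) = 0 and p_m(c*, λ*) = 0. -/
/-- `p_n` after clearing denominators, in terms of `μ = 7 (c-1)(22+5c) λ`. -/
lemma pC_eq_mu (n c l u : ℂ) (hu : 7 * (c - 1) * (22 + 5 * c) * l = u) :
    pC n c l = fC c n - 2 * u * ((2 * c - 1) * (n - 2) * (n - 1)
    * (3 * c + 10 * n + 2 * c * n + 12 * n ^ 2)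
    * (5 * c + 28 * n + 2 * c * n + 40 * n ^ 2)) + u ^ 2 * (21 * c ^ 2 + 70 * c * n - 14 * c ^ 2 * n + 200 * n ^ 2 - 135 * c * n ^ 2
      - 26 * c ^ 2 * n ^ 2 + 380 * n ^ 3 - 176 * c * n ^ 3 + 8 * c ^ 2 * n ^ 3
      + 436 * n ^ 4 + 132 * c * n ^ 4 + 8 * c ^ 2 * n ^ 4 + 448 * n ^ 5
      + 112 * c * n ^ 5 + 336 * n ^ 6) := by
  subst hu
  unfold pC gC hC
  ring

set_option maxHeartbeats 4000000 in
lemma pC_key (n m G F s c l : ℂ) (hs : s ≠ 0) (hG0 : G ≠ 0)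
    (hsd : s = 1 + m + n)
    (hG : G = -10 - 21 * m - 14 * m ^ 2 - 21 * n - 18 * m * n - 14 * n ^ 2
      + 8 * m ^ 2 * n ^ 2)
    (hF : F = -28 - 130 * m - 170 * m ^ 2 - 68 * m ^ 3 - 130 * n
      - 372 * m * n - 93 * m ^ 2 * n + 228 * m ^ 3 * n + 76 * m ^ 4 * n
      - 170 * n ^ 2 - 93 * m * n ^ 2 + 610 * m ^ 2 * n ^ 2
      + 300 * m ^ 3 * n ^ 2 - 152 * m ^ 4 * n ^ 2 - 68 * n ^ 3
      + 228 * m * n ^ 3 + 300 * m ^ 2 * n ^ 3 - 192 * m ^ 3 * n ^ 3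
      - 16 * m ^ 4 * n ^ 3 + 76 * m * n ^ 4 - 152 * m ^ 2 * n ^ 4
      - 16 * m ^ 3 * n ^ 4 + 32 * m ^ 4 * n ^ 4)
    (hc : c = -m * n * (4 * m * n - 2 * m - 2 * n - 3) / s)
    (hu : 7 * (c - 1) * (22 + 5 * c) * l = -F / (s * G)) : pC n c l = 0 := by
  rw [pC_eq_mu n c l _ hu, hc]
  unfold fC
  field_simp
  subst hsd hG hF
  ring

theorem typeC_second_intersection_point (n m : ℤ) (hn : 2 ≤ n) (hnm : n < m)
    (nn mm : ℂ) (hnn : nn = (n : ℂ)) (hmm : mm = (m : ℂ))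
    (G H F cs ls : ℂ)
    (hG : G = -10 - 21 * mm - 14 * mm ^ 2 - 21 * nn - 18 * mm * nn - 14 * nn ^ 2
      + 8 * mm ^ 2 * nn ^ 2)
    (hH : H = -22 - 22 * mm - 22 * nn - 15 * mm * nn - 10 * mm ^ 2 * nn
      - 10 * mm * nn ^ 2 + 20 * mm ^ 2 * nn ^ 2)
    (hF : F = -28 - 130 * mm - 170 * mm ^ 2 - 68 * mm ^ 3 - 130 * nn
      - 372 * mm * nn - 93 * mm ^ 2 * nn + 228 * mm ^ 3 * nn + 76 * mm ^ 4 * nn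
      - 170 * nn ^ 2 - 93 * mm * nn ^ 2 + 610 * mm ^ 2 * nn ^ 2
      + 300 * mm ^ 3 * nn ^ 2 - 152 * mm ^ 4 * nn ^ 2 - 68 * nn ^ 3
      + 228 * mm * nn ^ 3 + 300 * mm ^ 2 * nn ^ 3 - 192 * mm ^ 3 * nn ^ 3
      - 16 * mm ^ 4 * nn ^ 3 + 76 * mm * nn ^ 4 - 152 * mm ^ 2 * nn ^ 4
      - 16 * mm ^ 3 * nn ^ 4 + 32 * mm ^ 4 * nn ^ 4)
    (hcs : cs = -mm * nn * (4 * mm * nn - 2 * mm - 2 * nn - 3) / (1 + mm + nn))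
    (hls : ls = -(1 + mm + nn) * F
        / (7 * (2 * mm * nn - mm - 1) * (2 * mm * nn - nn - 1) * G * H)) :
    G ≠ 0 ∧ H ≠ 0 ∧ pC nn cs ls = 0 ∧ pC mm cs ls = 0 := by
  have hm : 3 ≤ m := by omega
  have hGi : (-10 - 21 * m - 14 * m ^ 2 - 21 * n - 18 * m * n - 14 * n ^ 2
      + 8 * m ^ 2 * n ^ 2 : ℤ) ≠ 0 := by
    rcases eq_or_lt_of_le hn with h | h
    · subst h
      intro h0
      have h1 : (2 * m - 9) * (3 * m + 4) = 0 := by linarith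
      rcases mul_eq_zero.mp h1 with h2 | h2 <;> omega
    · obtain ⟨a, rfl⟩ : ∃ a, n = 3 + a := ⟨n - 3, by ring⟩
      obtain ⟨b, rfl⟩ : ∃ b, m = 4 + a + b := ⟨m - 4 - a, by ring⟩
      have ha : 0 ≤ a := by omega
      have hb : 0 ≤ b := by omega
      apply ne_of_gt
      ring_nf
      positivity
  have hHi : (-22 - 22 * m - 22 * n - 15 * m * n - 10 * m ^ 2 * n
      - 10 * m * n ^ 2 + 20 * m ^ 2 * n ^ 2 : ℤ) ≠ 0 := by
    obtain ⟨a, rfl⟩ : ∃ a, n = 2 + a := ⟨n - 2, by ring⟩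
    obtain ⟨b, rfl⟩ : ∃ b, m = 3 + a + b := ⟨m - 3 - a, by ring⟩
    have ha : 0 ≤ a := by omega
    have hb : 0 ≤ b := by omega
    apply ne_of_gt
    ring_nf
    positivity
  have hsi : (1 + m + n : ℤ) ≠ 0 := by omega
  have hAi : (2 * m * n - m - 1 : ℤ) ≠ 0 := by
    apply ne_of_gt
    nlinarith
  have hBi : (2 * m * n - n - 1 : ℤ) ≠ 0 := by
    apply ne_of_gt
    nlinarith
  have hG0 : G ≠ 0 := by
    rw [hG, hnn, hmm]
    exact_mod_cast hGi
  have hH0 : H ≠ 0 := by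
    rw [hH, hnn, hmm]
    exact_mod_cast hHi
  have hs0 : 1 + mm + nn ≠ 0 := by
    rw [hnn, hmm]
    exact_mod_cast hsi
  have hA0 : 2 * mm * nn - mm - 1 ≠ 0 := by
    rw [hnn, hmm]
    exact_mod_cast hAi
  have hB0 : 2 * mm * nn - nn - 1 ≠ 0 := by
    rw [hnn, hmm]
    exact_mod_cast hBi
  have h1 : cs - 1 = -((2 * mm * nn - mm - 1) * (2 * mm * nn - nn - 1)) / (1 + mm + nn) := by
    rw [hcs]
    field_simp
    ring
  have h2 : 22 + 5 * cs = -H / (1 + mm + nn) := by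
    rw [hcs, hH]
    field_simp
    ring
  have hu : 7 * (cs - 1) * (22 + 5 * cs) * ls = -F / ((1 + mm + nn) * G) := by
    rw [h1, h2, hls]
    clear hls h1 h2 hcs hF hG hH
    generalize 2 * mm * nn - mm - 1 = A at *
    generalize 2 * mm * nn - nn - 1 = B at *
    generalize 1 + mm + nn = s at *
    field_simp
  refine ⟨hG0, hH0, ?_, ?_⟩
  · exact pC_key nn mm G F _ cs ls hs0 hG0 rfl hG hF hcs hu
  · refine pC_key mm nn G F _ cs ls hs0 hG0 (by ring) ?_ ?_ ?_ hu
    · rw [hG]; ring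
    · rw [hF]; ring
    · rw [hcs]; ring
end

section
/- Let n ≥ 3 be an integer. Then the solution set {(c,λ) ∈ ℂ × ℂ : r(c,λ) = 0 and q_n(c,λ) = 0} equals the set consisting of the four points: (−24, −1/245); ((4n−1)/(2n+1), (1+2n)(−1 − 33n − 60n^2 + 64n^3) / (14(n−1)(17+64n)(1+3n+4n^2))); (2−3n, −(−16 + 78n − 75n^2 + 15n^3) / (7(3n−1)(15n−32)(2−n+n^2))); and (−2n/(2n−3), (2n−3)(−48 + 93n − 45n^2 + 4n^3) / (7(4n−3)(17n−33)(8−11n+4n^2))). -/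
/-- The parafermion-orbifold truncation polynomial `r(c,λ)`. -/
noncomputable def rP (c lam : ℂ) : ℂ :=
  7 * lam * (c - 1) * (22 + 5 * c) * (16 - c + c ^ 2)
    + 64 + 6 * c - 45 * c ^ 2 - 5 * c ^ 3

theorem rP_ne_zero {c lam : ℂ} (h : rP c lam = 0) :
    c - 1 ≠ 0 ∧ 22 + 5 * c ≠ 0 ∧ 16 - c + c ^ 2 ≠ 0 := by
  unfold rP at h
  refine ⟨fun h1 => ?_, fun h1 => ?_, fun h1 => ?_⟩
  · have hc : c = 1 := by linear_combination h1
    subst hc; norm_num at h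
  · have hc : c = -22 / 5 := by linear_combination h1 / 5
    subst hc; norm_num at h
  · have h2 : -36 * (c + 24) = 0 := by
      linear_combination -h + (7 * lam * (c - 1) * (22 + 5 * c) - 5 * c - 50) * h1
    have hc : c = -24 := by linear_combination -h2 / 36
    subst hc; norm_num at h1

theorem rP_unique {c l m : ℂ} (h : rP c l = 0) (h' : rP c m = 0) : l = m := by
  obtain ⟨h1, h2, h3⟩ := rP_ne_zero h
  unfold rP at h h'
  have : (c - 1) * (22 + 5 * c) * (16 - c + c ^ 2) * (l - m) = 0 := by
    linear_combination (h - h') / 7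
  have h4 := (mul_eq_zero.mp this).resolve_left (mul_ne_zero (mul_ne_zero h1 h2) h3)
  linear_combination h4

theorem qD_iff {n c l : ℂ} (h : rP c l = 0) : qD n c l = 0 ↔
    (c + 24) * ((2 * n + 1) * c - (4 * n - 1)) * (c - (2 - 3 * n))
      * ((2 * n - 3) * c + 2 * n) = 0 := by
  obtain ⟨-, -, h3⟩ := rP_ne_zero h
  have key : (16 - c + c ^ 2) * qD n c l = 2 * ((c + 24) * ((2 * n + 1) * c - (4 * n - 1))
      * (c - (2 - 3 * n)) * ((2 * n - 3) * c + 2 * n)) := by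
    unfold rP at h
    unfold qD
    linear_combination
      (-3 * c + 10 * n - 2 * c * n - 19 * n ^ 2 + 2 * c * n ^ 2 + 12 * n ^ 3) * h
  constructor
  · intro hq
    rw [hq, mul_zero] at key
    linear_combination -key / 2
  · intro hf
    rw [hf, mul_zero] at key
    exact (mul_eq_zero.mp key).resolve_left h3

theorem rP_div {u v N D : ℂ} (hv : v ≠ 0) (hD : D ≠ 0)
    (h : 7 * N * (u - v) * (22 * v + 5 * u) * (16 * v ^ 2 - u * v + u ^ 2)
      + D * (64 * v ^ 4 + 6 * u * v ^ 3 - 45 * u ^ 2 * v ^ 2 - 5 * u ^ 3 * v) = 0) :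
    rP (u / v) (N / D) = 0 := by
  have key : rP (u / v) (N / D) * (D * v ^ 4) = 0 := by
    rw [← h]
    unfold rP
    field_simp
    ring
  exact (mul_eq_zero.mp key).resolve_right (mul_ne_zero hD (pow_ne_zero 4 hv))

/-- For `n ≥ 3`, the intersection of the parafermion-orbifold truncation curve
`{r = 0}` and the type-D truncation curve `{q_n = 0}` consists of exactly the
four listed points. -/
theorem parafermion_typeD_intersection (n : ℤ) (hn : 3 ≤ n)
    (nn : ℂ) (hnn : nn = (n : ℂ)) :
    {p : ℂ × ℂ | rP p.1 p.2 = 0 ∧ qD nn p.1 p.2 = 0}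
      = ({((-24 : ℂ), (-1/245 : ℂ)),
          ((4 * nn - 1) / (2 * nn + 1),
            (1 + 2 * nn) * (-1 - 33 * nn - 60 * nn ^ 2 + 64 * nn ^ 3)
              / (14 * (nn - 1) * (17 + 64 * nn) * (1 + 3 * nn + 4 * nn ^ 2))),
          (2 - 3 * nn,
            -(-16 + 78 * nn - 75 * nn ^ 2 + 15 * nn ^ 3)
              / (7 * (3 * nn - 1) * (15 * nn - 32) * (2 - nn + nn ^ 2))),
          (-(2 * nn) / (2 * nn - 3),
            (2 * nn - 3) * (-48 + 93 * nn - 45 * nn ^ 2 + 4 * nn ^ 3)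
              / (7 * (4 * nn - 3) * (17 * nn - 33) * (8 - 11 * nn + 4 * nn ^ 2)))} :
          Set (ℂ × ℂ)) := by
  have z (a b : ℤ) (hab : a * n + b ≠ 0) : (a : ℂ) * nn + b ≠ 0 := by
    rw [hnn]; exact_mod_cast hab
  have e1 : 2 * nn + 1 ≠ 0 := by simpa using z 2 1 (by omega)
  have e2 : nn - 1 ≠ 0 := by simpa [sub_eq_add_neg] using z 1 (-1) (by omega)
  have e3 : 17 + 64 * nn ≠ 0 := by simpa [add_comm] using z 64 17 (by omega)
  have e4 : 3 * nn - 1 ≠ 0 := by simpa [sub_eq_add_neg] using z 3 (-1) (by omega)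
  have e5 : 15 * nn - 32 ≠ 0 := by simpa [sub_eq_add_neg] using z 15 (-32) (by omega)
  have e6 : 2 * nn - 3 ≠ 0 := by simpa [sub_eq_add_neg] using z 2 (-3) (by omega)
  have e7 : 4 * nn - 3 ≠ 0 := by simpa [sub_eq_add_neg] using z 4 (-3) (by omega)
  have e8 : 17 * nn - 33 ≠ 0 := by simpa [sub_eq_add_neg] using z 17 (-33) (by omega)
  have e9 : 1 + 3 * nn + 4 * nn ^ 2 ≠ 0 := by
    have : 1 + 3 * n + 4 * n ^ 2 ≠ 0 := by nlinarith
    rw [hnn]; exact_mod_cast this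
  have e10 : 2 - nn + nn ^ 2 ≠ 0 := by
    have : 2 - n + n ^ 2 ≠ 0 := by nlinarith
    rw [hnn]; exact_mod_cast this
  have e11 : 8 - 11 * nn + 4 * nn ^ 2 ≠ 0 := by
    have : 8 - 11 * n + 4 * n ^ 2 ≠ 0 := by nlinarith
    rw [hnn]; exact_mod_cast this
  have e1' : 1 + 2 * nn ≠ 0 := by rwa [add_comm]
  have r1 : rP (-24) (-1/245) = 0 := by unfold rP; norm_num
  have r2 : rP ((4 * nn - 1) / (2 * nn + 1))
      ((1 + 2 * nn) * (-1 - 33 * nn - 60 * nn ^ 2 + 64 * nn ^ 3)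
        / (14 * (nn - 1) * (17 + 64 * nn) * (1 + 3 * nn + 4 * nn ^ 2))) = 0 := by
    exact rP_div e1 (by simp [e2, e3, e9]) (by ring)
  have r3 : rP (2 - 3 * nn) (-(-16 + 78 * nn - 75 * nn ^ 2 + 15 * nn ^ 3)
      / (7 * (3 * nn - 1) * (15 * nn - 32) * (2 - nn + nn ^ 2))) = 0 := by
    rw [← div_one (2 - 3 * nn)]
    exact rP_div one_ne_zero (by simp [e4, e5, e10]) (by ring)
  have r4 : rP (-(2 * nn) / (2 * nn - 3))
      ((2 * nn - 3) * (-48 + 93 * nn - 45 * nn ^ 2 + 4 * nn ^ 3)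
        / (7 * (4 * nn - 3) * (17 * nn - 33) * (8 - 11 * nn + 4 * nn ^ 2))) = 0 := by
    exact rP_div e6 (by simp [e7, e8, e11]) (by ring)
  ext ⟨c, l⟩
  simp only [Set.mem_ofPred_eq, Set.mem_insert_iff, Set.mem_singleton_iff, Prod.mk.injEq]
  constructor
  · rintro ⟨hr, hq⟩
    rw [qD_iff hr] at hq
    rcases mul_eq_zero.mp hq with hq | h
    · rcases mul_eq_zero.mp hq with hq | h
      · rcases mul_eq_zero.mp hq with h | h
        · have hc : c = -24 := by linear_combination h
          subst hc
          exact Or.inl ⟨rfl, rP_unique hr r1⟩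
        · have hc : c = (4 * nn - 1) / (2 * nn + 1) := by
            rw [eq_div_iff e1]; linear_combination h
          subst hc
          exact Or.inr (Or.inl ⟨rfl, rP_unique hr r2⟩)
      · have hc : c = 2 - 3 * nn := by linear_combination h
        subst hc
        exact Or.inr (Or.inr (Or.inl ⟨rfl, rP_unique hr r3⟩))
    · have hc : c = -(2 * nn) / (2 * nn - 3) := by
        rw [eq_div_iff e6]; linear_combination h
      subst hc
      exact Or.inr (Or.inr (Or.inr ⟨rfl, rP_unique hr r4⟩))
  · rintro (⟨rfl, rfl⟩ | ⟨rfl, rfl⟩ | ⟨rfl, rfl⟩ | ⟨rfl, rfl⟩)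
    · exact ⟨r1, (qD_iff r1).2 (by ring)⟩
    · refine ⟨r2, (qD_iff r2).2 ?_⟩
      rw [mul_div_cancel₀ _ e1]; ring
    · exact ⟨r3, (qD_iff r3).2 (by ring)⟩
    · refine ⟨r4, (qD_iff r4).2 ?_⟩
      rw [mul_div_cancel₀ _ e6]; ring
end

section
/- Let n ≥ 2 be an integer. Then the solution set {(c,λ) ∈ ℂ × ℂ : r(c,λ) = 0 and p_n(c,λ) = 0} equals the set consisting of the six points: (−24, −1/245); (1/2, 2/49); (−1−6n, −(1 − 27n − 60n^2 + 60n^3) / (14(1+3n)(30n−17)(1+n+2n^2))); (−(2+n)/(n−1), (n−1)(16 + 30n − 33n^2 + 2n^3) / (7(1+2n)(17n−32)(2−3n+2n^2))); (−2n, −(16 − 3n − 45n^2 + 10n^3) / (7(1+2n)(5n−11)(8+n+2n^2))); and (4n/(3+2n), (3+2n)(−24 − 51n − 6n^2 + 16n^3) / (7(2n−3)(33+32n)(4+5n+2n^2))). -/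
lemma q_ne {c l : ℂ} (h : rP c l = 0) : 16 - c + c ^ 2 ≠ 0 := by
  intro hq
  unfold rP at h
  have h1 : c = -24 := by
    linear_combination (1/36 : ℂ) * h
      - (1/36 : ℂ) * (7 * l * (c - 1) * (22 + 5 * c) - 5 * c - 50) * hq
  rw [h1] at hq
  norm_num at hq

lemma r_unique {c l l' : ℂ} (h : rP c l = 0) (h' : rP c l' = 0) : l = l' := by
  have hq := q_ne h
  unfold rP at h h'
  have h1 : c - 1 ≠ 0 := by
    intro h1
    have : c = 1 := by linear_combination h1
    rw [this] at h
    norm_num at h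
  have h2 : 22 + 5 * c ≠ 0 := by
    intro h2
    have : c = -22/5 := by linear_combination h2 / 5
    rw [this] at h
    norm_num at h
  have h3 : (c - 1) * (22 + 5 * c) * (16 - c + c ^ 2) ≠ 0 :=
    mul_ne_zero (mul_ne_zero h1 h2) hq
  apply mul_right_cancel₀ h3
  linear_combination (h - h') / 7

lemma r_div {c A D : ℂ} (hD : D ≠ 0)
    (h : 7 * A * (c - 1) * (22 + 5 * c) * (16 - c + c ^ 2)
      + D * (64 + 6 * c - 45 * c ^ 2 - 5 * c ^ 3) = 0) : rP c (A / D) = 0 := by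
  have e : rP c (A / D) * D = 0 := by
    unfold rP
    rw [← h]
    have : A / D * D = A := div_mul_cancel₀ A hD
    linear_combination 7 * (c - 1) * (22 + 5 * c) * (16 - c + c ^ 2) * this
  exact (mul_eq_zero.1 e).resolve_right hD

lemma key_identity_s17 (n c l : ℂ) :
    (16 - c + c ^ 2) ^ 2 * pC n c l =
      8 * (n + 1) * (2 * n - 1) * ((c + 24) ^ 2 * (2 * c - 1) ^ 2 * (c + 1 + 6 * n)
        * (c * (n - 1) + 2 + n) * (c + 2 * n) * (c * (3 + 2 * n) - 4 * n))
      + rP c l * ((16 - c + c ^ 2) * (-2 * (2 * c - 1) * (n - 2) * (n - 1)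
            * (3 * c + 10 * n + 2 * c * n + 12 * n ^ 2)
            * (5 * c + 28 * n + 2 * c * n + 40 * n ^ 2))
        + (21 * c ^ 2 + 70 * c * n - 14 * c ^ 2 * n + 200 * n ^ 2 - 135 * c * n ^ 2
            - 26 * c ^ 2 * n ^ 2 + 380 * n ^ 3 - 176 * c * n ^ 3 + 8 * c ^ 2 * n ^ 3
            + 436 * n ^ 4 + 132 * c * n ^ 4 + 8 * c ^ 2 * n ^ 4 + 448 * n ^ 5
            + 112 * c * n ^ 5 + 336 * n ^ 6)
          * (rP c l - 2 * (64 + 6 * c - 45 * c ^ 2 - 5 * c ^ 3))) := by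
  unfold pC fC gC hC rP
  ring

lemma p_iff {n c l : ℂ} (hn1 : n + 1 ≠ 0) (hn2 : 2 * n - 1 ≠ 0) (h : rP c l = 0) :
    pC n c l = 0 ↔ (c + 24 = 0 ∨ 2 * c - 1 = 0 ∨ c + 1 + 6 * n = 0
      ∨ c * (n - 1) + 2 + n = 0 ∨ c + 2 * n = 0 ∨ c * (3 + 2 * n) - 4 * n = 0) := by
  have hq := q_ne h
  have hk := key_identity_s17 n c l
  rw [h, zero_mul, add_zero] at hk
  have e : pC n c l = 0 ↔ (16 - c + c ^ 2) ^ 2 * pC n c l = 0 := by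
    simp [hq]
  rw [e, hk]
  simp [hn1, hn2, or_assoc]

/-- For `n ≥ 2`, the intersection of the parafermion-orbifold truncation curve
`{r = 0}` and the type-C truncation curve `{p_n = 0}` consists of exactly the
six listed points. -/
theorem parafermion_typeC_intersection (n : ℤ) (hn : 2 ≤ n)
    (nn : ℂ) (hnn : nn = (n : ℂ)) :
    {p : ℂ × ℂ | rP p.1 p.2 = 0 ∧ pC nn p.1 p.2 = 0}
      = ({((-24 : ℂ), (-1/245 : ℂ)),
          ((1/2 : ℂ), (2/49 : ℂ)),
          (-1 - 6 * nn,
            -(1 - 27 * nn - 60 * nn ^ 2 + 60 * nn ^ 3)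
              / (14 * (1 + 3 * nn) * (30 * nn - 17) * (1 + nn + 2 * nn ^ 2))),
          (-(2 + nn) / (nn - 1),
            (nn - 1) * (16 + 30 * nn - 33 * nn ^ 2 + 2 * nn ^ 3)
              / (7 * (1 + 2 * nn) * (17 * nn - 32) * (2 - 3 * nn + 2 * nn ^ 2))),
          (-(2 * nn),
            -(16 - 3 * nn - 45 * nn ^ 2 + 10 * nn ^ 3)
              / (7 * (1 + 2 * nn) * (5 * nn - 11) * (8 + nn + 2 * nn ^ 2))),
          (4 * nn / (3 + 2 * nn),
            (3 + 2 * nn) * (-24 - 51 * nn - 6 * nn ^ 2 + 16 * nn ^ 3)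
              / (7 * (2 * nn - 3) * (33 + 32 * nn) * (4 + 5 * nn + 2 * nn ^ 2)))} :
          Set (ℂ × ℂ)) := by
  have lin : ∀ a b : ℤ, a * n + b ≠ 0 → (a : ℂ) * nn + b ≠ 0 := by
    intro a b h
    rw [hnn]
    exact_mod_cast h
  have quad : ∀ a b c : ℤ, a * n ^ 2 + b * n + c ≠ 0 → (a : ℂ) * nn ^ 2 + b * nn + c ≠ 0 := by
    intro a b c h
    rw [hnn]
    exact_mod_cast h
  have a1 : nn + 1 ≠ 0 := by simpa using lin 1 1 (by omega)
  have a2 : 2 * nn - 1 ≠ 0 := by simpa [sub_eq_add_neg] using lin 2 (-1) (by omega)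
  have a3 : nn - 1 ≠ 0 := by simpa [sub_eq_add_neg] using lin 1 (-1) (by omega)
  have a4 : 3 + 2 * nn ≠ 0 := by simpa [add_comm] using lin 2 3 (by omega)
  have b1 : 1 + 3 * nn ≠ 0 := by simpa [add_comm] using lin 3 1 (by omega)
  have b2 : 30 * nn - 17 ≠ 0 := by simpa [sub_eq_add_neg] using lin 30 (-17) (by omega)
  have b3 : 1 + nn + 2 * nn ^ 2 ≠ 0 := by
    have := quad 2 1 1 (by nlinarith)
    push_cast at this
    intro h; apply this; linear_combination h
  have b4 : 1 + 2 * nn ≠ 0 := by simpa [add_comm] using lin 2 1 (by omega)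
  have b5 : 17 * nn - 32 ≠ 0 := by simpa [sub_eq_add_neg] using lin 17 (-32) (by omega)
  have b6 : 2 - 3 * nn + 2 * nn ^ 2 ≠ 0 := by
    have := quad 2 (-3) 2 (by nlinarith)
    push_cast at this
    intro h; apply this; linear_combination h
  have b7 : 5 * nn - 11 ≠ 0 := by simpa [sub_eq_add_neg] using lin 5 (-11) (by omega)
  have b8 : 8 + nn + 2 * nn ^ 2 ≠ 0 := by
    have := quad 2 1 8 (by nlinarith)
    push_cast at this
    intro h; apply this; linear_combination h
  have b9 : 2 * nn - 3 ≠ 0 := by simpa [sub_eq_add_neg] using lin 2 (-3) (by omega)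
  have b10 : 33 + 32 * nn ≠ 0 := by simpa [add_comm] using lin 32 33 (by omega)
  have b11 : 4 + 5 * nn + 2 * nn ^ 2 ≠ 0 := by
    have := quad 2 5 4 (by nlinarith)
    push_cast at this
    intro h; apply this; linear_combination h
  have r1 : rP (-24) (-1/245) = 0 := by unfold rP; norm_num
  have r2 : rP (1/2) (2/49) = 0 := by unfold rP; norm_num
  have r3 : rP (-1 - 6 * nn) (-(1 - 27 * nn - 60 * nn ^ 2 + 60 * nn ^ 3)
              / (14 * (1 + 3 * nn) * (30 * nn - 17) * (1 + nn + 2 * nn ^ 2))) = 0 := by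
    refine r_div (mul_ne_zero (mul_ne_zero (mul_ne_zero (by norm_num) b1) b2) b3) ?_
    ring
  have r4 : rP (-(2 + nn) / (nn - 1)) ((nn - 1) * (16 + 30 * nn - 33 * nn ^ 2 + 2 * nn ^ 3)
              / (7 * (1 + 2 * nn) * (17 * nn - 32) * (2 - 3 * nn + 2 * nn ^ 2))) = 0 := by
    refine r_div (mul_ne_zero (mul_ne_zero (mul_ne_zero (by norm_num) b4) b5) b6) ?_
    field_simp
    ring
  have r5 : rP (-(2 * nn)) (-(16 - 3 * nn - 45 * nn ^ 2 + 10 * nn ^ 3)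
              / (7 * (1 + 2 * nn) * (5 * nn - 11) * (8 + nn + 2 * nn ^ 2))) = 0 := by
    refine r_div (mul_ne_zero (mul_ne_zero (mul_ne_zero (by norm_num) b4) b7) b8) ?_
    ring
  have r6 : rP (4 * nn / (3 + 2 * nn)) ((3 + 2 * nn) * (-24 - 51 * nn - 6 * nn ^ 2 + 16 * nn ^ 3)
              / (7 * (2 * nn - 3) * (33 + 32 * nn) * (4 + 5 * nn + 2 * nn ^ 2))) = 0 := by
    refine r_div (mul_ne_zero (mul_ne_zero (mul_ne_zero (by norm_num) b9) b10) b11) ?_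
    field_simp
    ring
  ext ⟨c, l⟩
  simp only [Set.mem_ofPred_eq, Set.mem_insert_iff, Set.mem_singleton_iff, Prod.mk.injEq]
  constructor
  · rintro ⟨hr, hp⟩
    rcases (p_iff a1 a2 hr).1 hp with h | h | h | h | h | h
    · have hc : c = -24 := by linear_combination h
      subst hc
      exact Or.inl ⟨rfl, r_unique hr r1⟩
    · have hc : c = 1/2 := by linear_combination h / 2
      subst hc
      exact Or.inr (Or.inl ⟨rfl, r_unique hr r2⟩)
    · have hc : c = -1 - 6 * nn := by linear_combination h
      rw [hc] at hr
      exact Or.inr (Or.inr (Or.inl ⟨hc, r_unique hr r3⟩))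
    · have hc : c = -(2 + nn) / (nn - 1) := by
        rw [eq_div_iff a3]; linear_combination h
      rw [hc] at hr
      exact Or.inr (Or.inr (Or.inr (Or.inl ⟨hc, r_unique hr r4⟩)))
    · have hc : c = -(2 * nn) := by linear_combination h
      rw [hc] at hr
      exact Or.inr (Or.inr (Or.inr (Or.inr (Or.inl ⟨hc, r_unique hr r5⟩))))
    · have hc : c = 4 * nn / (3 + 2 * nn) := by
        rw [eq_div_iff a4]; linear_combination h
      rw [hc] at hr
      exact Or.inr (Or.inr (Or.inr (Or.inr (Or.inr ⟨hc, r_unique hr r6⟩))))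
  · rintro (⟨hc, hl⟩ | ⟨hc, hl⟩ | ⟨hc, hl⟩ | ⟨hc, hl⟩ | ⟨hc, hl⟩ | ⟨hc, hl⟩)
    · have hr : rP c l = 0 := by rw [hc, hl]; exact r1
      exact ⟨hr, (p_iff a1 a2 hr).2 (Or.inl (by rw [hc]; ring))⟩
    · have hr : rP c l = 0 := by rw [hc, hl]; exact r2
      exact ⟨hr, (p_iff a1 a2 hr).2 (Or.inr (Or.inl (by rw [hc]; ring)))⟩
    · have hr : rP c l = 0 := by rw [hc, hl]; exact r3
      exact ⟨hr, (p_iff a1 a2 hr).2 (Or.inr (Or.inr (Or.inl (by rw [hc]; ring))))⟩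
    · have hr : rP c l = 0 := by rw [hc, hl]; exact r4
      refine ⟨hr, (p_iff a1 a2 hr).2 (Or.inr (Or.inr (Or.inr (Or.inl ?_))))⟩
      rw [eq_div_iff a3] at hc
      linear_combination hc
    · have hr : rP c l = 0 := by rw [hc, hl]; exact r5
      exact ⟨hr, (p_iff a1 a2 hr).2 (Or.inr (Or.inr (Or.inr (Or.inr (Or.inl (by rw [hc]; ring))))))⟩
    · have hr : rP c l = 0 := by rw [hc, hl]; exact r6
      refine ⟨hr, (p_iff a1 a2 hr).2 (Or.inr (Or.inr (Or.inr (Or.inr (Or.inr ?_)))))⟩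
      rw [eq_div_iff a4] at hc
      linear_combination hc
end

section
/- Let n, m be positive integers (so that m + n ≠ 0 and the denominators below are nonzero). Define the rational function c(t,s) = −t(s + 2t + 2st + 2t^2)(−3 − 2s + 4st + 4t^2)/(s + t + 1), and set ℓ = −(n+1) + n/(2(m+n)) and ℓ' = −(m+1) + m/(2(m+n)). Then c(n, ℓ) = c(m, ℓ') = −(2m + n + 2mn)(m + 2n + 2mn)/(m + n). -/
/-- Central-charge verification for the first family of type-C coincidences:
with `ℓ = -(n+1) + n/(2(m+n))` and `ℓ' = -(m+1) + m/(2(m+n))`, the central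
charges `c(n,ℓ)` and `c(m,ℓ')` both equal
`-(2m+n+2mn)(m+2n+2mn)/(m+n)`. -/
theorem typeC_coincidence_central_charges (n m : ℕ) (hn : 0 < n) (hm : 0 < m) :
    let cfun : ℂ → ℂ → ℂ := fun t s =>
      -t * (s + 2 * t + 2 * s * t + 2 * t ^ 2)
        * (-3 - 2 * s + 4 * s * t + 4 * t ^ 2) / (s + t + 1)
    let l : ℂ := -((n : ℂ) + 1) + (n : ℂ) / (2 * ((m : ℂ) + (n : ℂ)))
    let l' : ℂ := -((m : ℂ) + 1) + (m : ℂ) / (2 * ((m : ℂ) + (n : ℂ)))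
    cfun (n : ℂ) l
        = -(2 * (m : ℂ) + (n : ℂ) + 2 * (m : ℂ) * (n : ℂ))
            * ((m : ℂ) + 2 * (n : ℂ) + 2 * (m : ℂ) * (n : ℂ)) / ((m : ℂ) + (n : ℂ))
      ∧ cfun (m : ℂ) l'
        = -(2 * (m : ℂ) + (n : ℂ) + 2 * (m : ℂ) * (n : ℂ))
            * ((m : ℂ) + 2 * (n : ℂ) + 2 * (m : ℂ) * (n : ℂ)) / ((m : ℂ) + (n : ℂ)) := by
  intro cfun l l'
  have key : ∀ a b : ℂ, a ≠ 0 → b + a ≠ 0 →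
      cfun a (-(a + 1) + a / (2 * (b + a)))
        = -(2 * b + a + 2 * b * a) * (b + 2 * a + 2 * b * a) / (b + a) := by
    intro a b ha hab
    have hd : -(a + 1) + a / (2 * (b + a)) + a + 1 = a / (2 * (b + a)) := by ring
    simp only [cfun]
    rw [hd]
    field_simp
    ring
  have hn0 : (n : ℂ) ≠ 0 := by exact_mod_cast hn.ne'
  have hm0 : (m : ℂ) ≠ 0 := by exact_mod_cast hm.ne'
  have h1 : (m : ℂ) + n ≠ 0 := by
    have : m + n ≠ 0 := by omega
    exact_mod_cast this
  have h2 : (n : ℂ) + m ≠ 0 := by rwa [add_comm]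
  refine ⟨key n m hn0 h1, ?_⟩
  have h := key m n hm0 h2
  rw [add_comm (n : ℂ) (m : ℂ)] at h
  refine h.trans ?_
  ring
end
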